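/- arXiv:2403.10995 — 2 statements merged into one kernel-verified Lean document; each statement's English description precedes it below -/
import Mathlib

section
/- (Multivariate Gaussian mechanism on singular values) Let r ≥ 1, let Δ > 0, let 0 < ε < 1 and 0 < δ < 1, and set σ = Δ·√(2·ln(1.25/δ))/ε. Let s, s' ∈ ℝ^r with Euclidean distance √(Σ_{i=1}^r (s_i − s'_i)²) ≤ Δ. Let μ be the product measure on ℝ^r whose i-th factor is the Gaussian measure N(s_i, σ²), and let ν be the product measure whose i-th factor is N(s'_i, σ²) (i.e., the distributions of s + g and s' + g where g has independent N(0, σ²) coordinates). Then for every measurable set S ⊆ ℝ^r, μ(S) ≤ e^ε · ν(S) + δ. -/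
open MeasureTheory ProbabilityTheory

lemma gm_pi_density {r : ℕ} (m : Fin r → ℝ) {v : NNReal} (hv : v ≠ 0) :
    Measure.pi (fun i => gaussianReal (m i) v) =
      (volume : Measure (Fin r → ℝ)).withDensity
        (fun x => ENNReal.ofReal (∏ i, gaussianPDFReal (m i) v (x i))) := by
  refine Measure.pi_eq ?_
  intro s hs
  rw [withDensity_apply _ (MeasurableSet.univ_pi hs), volume_pi, Measure.restrict_pi_pi,
    ← ofReal_integral_eq_lintegral_ofReal]
  · rw [integral_fintype_prod_eq_prod (fun i x => gaussianPDFReal (m i) v x),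
      ENNReal.ofReal_prod_of_nonneg]
    · refine Finset.prod_congr rfl fun i _ => ?_
      rw [gaussianReal_apply_eq_integral _ hv]
    · intro i _
      exact integral_nonneg fun x => gaussianPDFReal_nonneg _ _ _
  · exact Integrable.fintype_prod_dep (f := fun i x => gaussianPDFReal (m i) v x)
      (fun i => (integrable_gaussianPDFReal (m i) v).restrict)
  · exact Filter.Eventually.of_forall fun x =>
      Finset.prod_nonneg fun i _ => gaussianPDFReal_nonneg _ _ _

lemma gm_prod_pdf {r : ℕ} (m : Fin r → ℝ) (v : NNReal) (x : Fin r → ℝ) :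
    ∏ i, gaussianPDFReal (m i) v (x i) =
      (∏ _i : Fin r, (Real.sqrt (2 * Real.pi * v))⁻¹) *
        Real.exp (-(∑ i, (x i - m i) ^ 2) / (2 * v)) := by
  simp only [gaussianPDFReal, Finset.prod_mul_distrib, ← Real.exp_sum]
  congr 2
  rw [← Finset.sum_neg_distrib, Finset.sum_div]

lemma gm_scalar (l x : ℝ) (hl : 1 ≤ l) : 1 - Real.exp (-x) ≤ 1 / 4 * Real.exp (l * x) := by
  rcases le_total x 0 with hx | hx
  · have h1 : 1 ≤ Real.exp (-x) := Real.one_le_exp (by linarith)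
    have := Real.exp_pos (l * x)
    linarith
  · have h2 : Real.exp x ≤ Real.exp (l * x) := Real.exp_le_exp.2 (by nlinarith)
    have h3 : Real.exp (-x) * Real.exp x = 1 := by rw [← Real.exp_add]; simp
    have h4 := Real.exp_pos (-x)
    have h5 := Real.exp_pos x
    have : 1 - Real.exp (-x) ≤ 1 / 4 * Real.exp x := by
      nlinarith [sq_nonneg (Real.exp x - 2), mul_nonneg h4.le (sq_nonneg (Real.exp x - 2))]
    linarith

lemma gm_pointwise {r : ℕ} (s s' x : Fin r → ℝ) {v : NNReal} (hv : v ≠ 0) (ε l : ℝ) (hl : 1 ≤ l) :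
    ∏ i, gaussianPDFReal (s i) v (x i) ≤
      Real.exp ε * ∏ i, gaussianPDFReal (s' i) v (x i) +
      (1 / 4 * Real.exp (l * (1 + l) * (∑ i, (s i - s' i) ^ 2) / (2 * v) - l * ε)) *
        ∏ i, gaussianPDFReal (s i + l * (s i - s' i)) v (x i) := by
  rw [gm_prod_pdf, gm_prod_pdf, gm_prod_pdf (fun i => s i + l * (s i - s' i))]
  have hv' : (v : ℝ) ≠ 0 := by exact_mod_cast hv
  set K := ∏ _i : Fin r, (Real.sqrt (2 * Real.pi * v))⁻¹
  have hK : 0 ≤ K := Finset.prod_nonneg fun i _ => by positivity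
  have hsum : ∑ i, (x i - (s i + l * (s i - s' i))) ^ 2 =
      (1 + l) * ∑ i, (x i - s i) ^ 2 - l * ∑ i, (x i - s' i) ^ 2
        + l * (1 + l) * ∑ i, (s i - s' i) ^ 2 := by
    simp only [Finset.mul_sum, ← Finset.sum_add_distrib, ← Finset.sum_sub_distrib]
    refine Finset.sum_congr rfl fun i _ => ?_
    ring
  rw [hsum]
  set A := ∑ i, (x i - s i) ^ 2
  set B := ∑ i, (x i - s' i) ^ 2
  set D := ∑ i, (s i - s' i) ^ 2
  have h := gm_scalar l ((B - A) / (2 * v) - ε) hl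
  have hA := Real.exp_pos (-A / (2 * v))
  have h' := mul_le_mul_of_nonneg_left (mul_le_mul_of_nonneg_left h hA.le) hK
  have e1 : Real.exp (-A / (2 * v)) * Real.exp (-((B - A) / (2 * v) - ε)) =
      Real.exp ε * Real.exp (-B / (2 * v)) := by
    rw [← Real.exp_add, ← Real.exp_add]; congr 1; ring
  have e2 : Real.exp (-A / (2 * v)) * Real.exp (l * ((B - A) / (2 * v) - ε)) =
      Real.exp (l * (1 + l) * D / (2 * v) - l * ε) *
        Real.exp (-((1 + l) * A - l * B + l * (1 + l) * D) / (2 * v)) := by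
    rw [← Real.exp_add, ← Real.exp_add]; congr 1; ring
  linear_combination h' + K * e1 + 1 / 4 * K * e2

lemma gm_measure {r : ℕ} (s s' : Fin r → ℝ) {v : NNReal} (hv : v ≠ 0) (ε l : ℝ) (hl : 1 ≤ l)
    (S : Set (Fin r → ℝ)) (hS : MeasurableSet S) :
    Measure.pi (fun i => gaussianReal (s i) v) S ≤
      ENNReal.ofReal (Real.exp ε) * Measure.pi (fun i => gaussianReal (s' i) v) S +
      ENNReal.ofReal
        (1 / 4 * Real.exp (l * (1 + l) * (∑ i, (s i - s' i) ^ 2) / (2 * v) - l * ε)) := by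
  have hm : ∀ m : Fin r → ℝ, Measurable
      (fun x : Fin r → ℝ => ENNReal.ofReal (∏ i, gaussianPDFReal (m i) v (x i))) := by
    intro m
    refine ENNReal.measurable_ofReal.comp (Finset.measurable_prod _ fun i _ => ?_)
    exact (measurable_gaussianPDFReal (m i) v).comp (measurable_pi_apply i)
  set c := 1 / 4 * Real.exp (l * (1 + l) * (∑ i, (s i - s' i) ^ 2) / (2 * v) - l * ε) with hc
  have hc0 : 0 ≤ c := by positivity
  have hn : ∀ (m x : Fin r → ℝ), 0 ≤ ∏ i, gaussianPDFReal (m i) v (x i) := fun m x =>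
    Finset.prod_nonneg fun i _ => gaussianPDFReal_nonneg _ _ _
  calc Measure.pi (fun i => gaussianReal (s i) v) S
      ≤ ENNReal.ofReal (Real.exp ε) * Measure.pi (fun i => gaussianReal (s' i) v) S +
        ENNReal.ofReal c * Measure.pi (fun i => gaussianReal (s i + l * (s i - s' i)) v) S := by
        rw [gm_pi_density s hv, gm_pi_density s' hv,
          gm_pi_density (fun i => s i + l * (s i - s' i)) hv,
          withDensity_apply _ hS, withDensity_apply _ hS, withDensity_apply _ hS,
          ← lintegral_const_mul _ (hm _), ← lintegral_const_mul _ (hm _),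
          ← lintegral_add_left ((hm _).const_mul _)]
        refine lintegral_mono fun x => ?_
        dsimp only
        rw [← ENNReal.ofReal_mul (Real.exp_pos ε).le, ← ENNReal.ofReal_mul hc0,
          ← ENNReal.ofReal_add (mul_nonneg (Real.exp_pos ε).le (hn _ _))
            (mul_nonneg hc0 (hn (fun i => s i + l * (s i - s' i)) _))]
        exact ENNReal.ofReal_le_ofReal (gm_pointwise s s' x hv ε l hl)
    _ ≤ _ := by
        gcongr
        exact mul_le_of_le_one_right' prob_le_one

/-- the real inequality: `a = 2 log (1.25/δ)`, `η ≤ ε²/(2a)`. -/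
lemma gm_real (a ε D : ℝ) (hε0 : 0 < ε) (hε1 : ε < 1) (ha : 0.42 ≤ a)
    (hD : D ≤ ε ^ 2 / (2 * a)) :
    ∃ l : ℝ, 1 ≤ l ∧ 1 / 4 * Real.exp (l * (1 + l) * D - l * ε) ≤ 1.25 * Real.exp (-a / 2) := by
  have ha0 : 0 < a := by linarith
  have h5 : Real.exp 1.6 ≤ 5 := by
    have h1 := Real.exp_one_lt_d9
    have h2 : Real.exp 1.6 ^ 5 = Real.exp 1 ^ 8 := by
      rw [← Real.exp_nat_mul, ← Real.exp_nat_mul]; norm_num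
    have h3 : Real.exp 1 ^ 8 ≤ 2.7182818286 ^ 8 :=
      pow_le_pow_left₀ (Real.exp_pos 1).le h1.le 8
    refine le_of_pow_le_pow_left₀ (n := 5) (by norm_num) (by norm_num) ?_
    rw [h2]
    exact h3.trans (by norm_num)
  suffices H : ∃ l : ℝ, 1 ≤ l ∧ l * (1 + l) * (ε ^ 2 / (2 * a)) - l * ε ≤ 1.6 + -a / 2 by
    obtain ⟨l, hl, h⟩ := H
    refine ⟨l, hl, ?_⟩
    have h1 : l * (1 + l) * D ≤ l * (1 + l) * (ε ^ 2 / (2 * a)) :=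
      mul_le_mul_of_nonneg_left hD (by nlinarith)
    have h2 : Real.exp (l * (1 + l) * D - l * ε) ≤ Real.exp (1.6 + -a / 2) :=
      Real.exp_le_exp.2 (by linarith)
    rw [Real.exp_add] at h2
    have := mul_le_mul_of_nonneg_right h5 (Real.exp_pos (-a / 2)).le
    linarith
  rcases le_total (3 / 2 * ε) a with h | h
  · refine ⟨a / ε - 1 / 2, ?_, ?_⟩
    · have : 3 / 2 ≤ a / ε := by rw [le_div_iff₀ hε0]; exact h
      linarith
    · have : (a / ε - 1 / 2) * (1 + (a / ε - 1 / 2)) * (ε ^ 2 / (2 * a)) - (a / ε - 1 / 2) * ε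
        = -a / 2 + ε / 2 - ε ^ 2 / (8 * a) := by
        field_simp
        ring
      rw [this]
      have : 0 ≤ ε ^ 2 / (8 * a) := by positivity
      linarith
  · refine ⟨1, le_rfl, ?_⟩
    have : 1 * (1 + 1) * (ε ^ 2 / (2 * a)) - 1 * ε = (ε ^ 2 - a * ε) / a := by
      field_simp
      ring
    rw [this, div_le_iff₀ ha0]
    nlinarith [mul_nonneg (sub_nonneg.2 ha) (sub_nonneg.2 h), mul_pos hε0 (sub_pos.2 hε1)]

/-- **multivariate Gaussian mechanism on singular values.** With
`σ = Δ·√(2·ln(1.25/δ))/ε` and `‖s − s'‖₂ ≤ Δ`, the product Gaussian measures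
centered at `s` and `s'` with coordinate variance `σ²` are
`(ε, δ)`-indistinguishable. -/
theorem gaussian_mechanism_multivariate (r : ℕ) (hr : 1 ≤ r)
    (Δ ε δ : ℝ)
    (hΔ : 0 < Δ) (hε0 : 0 < ε) (hε1 : ε < 1) (hδ0 : 0 < δ) (hδ1 : δ < 1)
    (σ : ℝ) (hσ : σ = Δ * Real.sqrt (2 * Real.log (1.25 / δ)) / ε)
    (s s' : Fin r → ℝ)
    (hss' : Real.sqrt (∑ i : Fin r, (s i - s' i) ^ 2) ≤ Δ)
    (S : Set (Fin r → ℝ)) (hS : MeasurableSet S) :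
    Measure.pi (fun i => gaussianReal (s i) (Real.toNNReal (σ ^ 2))) S
      ≤ ENNReal.ofReal (Real.exp ε)
          * Measure.pi (fun i => gaussianReal (s' i) (Real.toNNReal (σ ^ 2))) S
        + ENNReal.ofReal δ := by
  have h125 : (0.21 : ℝ) ≤ Real.log 1.25 := by
    have h1 := Real.one_sub_inv_le_log_of_pos (x := 1.118) (by norm_num)
    have h2 : Real.log (1.118 ^ 2) ≤ Real.log 1.25 := Real.log_le_log (by norm_num) (by norm_num)
    rw [Real.log_pow] at h2
    norm_num at h1 h2 ⊢
    linarith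
  have hL : 0.21 ≤ Real.log (1.25 / δ) := by
    refine h125.trans (Real.log_le_log (by norm_num) ?_)
    rw [le_div_iff₀ hδ0]
    nlinarith
  set a := 2 * Real.log (1.25 / δ) with ha
  have ha42 : 0.42 ≤ a := by linarith
  have ha0 : 0 < a := by linarith
  have hσ2 : σ ^ 2 = Δ ^ 2 * a / ε ^ 2 := by
    rw [hσ, div_pow, mul_pow, Real.sq_sqrt ha0.le]
  have hσpos : 0 < σ ^ 2 := by rw [hσ2]; positivity
  have hv : Real.toNNReal (σ ^ 2) ≠ 0 := (Real.toNNReal_pos.2 hσpos).ne'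
  have hvc : ((Real.toNNReal (σ ^ 2) : NNReal) : ℝ) = σ ^ 2 := Real.coe_toNNReal _ hσpos.le
  have hD : ∑ i, (s i - s' i) ^ 2 ≤ Δ ^ 2 := (Real.sqrt_le_left hΔ.le).1 hss'
  have hD' : (∑ i, (s i - s' i) ^ 2) / (2 * σ ^ 2) ≤ ε ^ 2 / (2 * a) := by
    calc (∑ i, (s i - s' i) ^ 2) / (2 * σ ^ 2) ≤ Δ ^ 2 / (2 * σ ^ 2) := by gcongr
      _ = ε ^ 2 / (2 * a) := by rw [hσ2]; field_simp
  obtain ⟨l, hl, h⟩ := gm_real a ε _ hε0 hε1 ha42 hD'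
  refine (gm_measure s s' hv ε l hl S hS).trans ?_
  gcongr
  rw [hvc, mul_div_assoc]
  refine h.trans (le_of_eq ?_)
  have : -a / 2 = -Real.log (1.25 / δ) := by rw [ha]; ring
  rw [this, Real.exp_neg, Real.exp_log (by positivity)]
  field_simp
end

section
/- (Theorem 1, joint perturbation mechanism) Let r ≥ 1, let 0 < ε_lr < 1, ε_e > 0, and 0 < δ < 1, and set σ = √2·√(2·ln(1.25/δ))/ε_lr. Let s, s' ∈ ℝ^r with √(Σ_{i=1}^r (s_i − s'_i)²) ≤ √2, and let E, E' ∈ ℝ with |E − E'| ≤ 1. Let μ be the product measure on ℝ^r × ℝ whose first factor is the product of the Gaussian measures N(s_i, σ²) and whose second factor is the Laplace measure Lap(E, 1/ε_e), and let ν be the analogous product built from s' and E'. Then for every measurable set W ⊆ ℝ^r × ℝ, μ(W) ≤ e^{ε_lr + ε_e}·ν(W) + δ; that is, the joint mechanism that perturbs the top-r singular values with Gaussian noise and the edge count with Laplace noise satisfies the (ε_lr + ε_e, δ) indistinguishability inequality. -/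
open MeasureTheory ProbabilityTheory

/-- The Laplace measure `Lap(m, 1/ε)` on `ℝ`: the measure with density
`t ↦ (ε/2)·exp(−ε·|t − m|)` with respect to Lebesgue measure. -/
noncomputable def lapMeasure (m ε : ℝ) : Measure ℝ :=
  volume.withDensity fun t => ENNReal.ofReal ((ε / 2) * Real.exp (-(ε * |t - m|)))

open scoped ENNReal NNReal

lemma aux_pi_withDensity {r : ℕ} (μ ν : Fin r → Measure ℝ) [∀ i, IsProbabilityMeasure (μ i)]
    [∀ i, IsProbabilityMeasure (ν i)]
    (f : Fin r → ℝ → ℝ≥0∞) (hf : ∀ i, Measurable (f i))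
    (h : ∀ i, μ i = (ν i).withDensity (f i)) :
    Measure.pi μ = (Measure.pi ν).withDensity (fun x => ∏ i, f i (x i)) := by
  refine (Measure.pi_eq ?_)
  intro S hS
  rw [withDensity_apply _ (MeasurableSet.univ_pi hS), ← lintegral_indicator (MeasurableSet.univ_pi hS)]
  have e : ∀ x : Fin r → ℝ, (Set.univ.pi S).indicator (fun x => ∏ i, f i (x i)) x
      = ∏ i, (S i).indicator (f i) (x i) := by
    intro x
    by_cases hx : x ∈ Set.univ.pi S
    · rw [Set.indicator_of_mem hx]
      refine Finset.prod_congr rfl fun i _ => ?_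
      rw [Set.indicator_of_mem (hx i (Set.mem_univ i))]
    · rw [Set.indicator_of_notMem hx]
      simp only [Set.mem_pi, Set.mem_univ, true_imp_iff, not_forall] at hx
      obtain ⟨i, hi⟩ := hx
      exact (Finset.prod_eq_zero (Finset.mem_univ i) (Set.indicator_of_notMem hi _)).symm
  have hm : ∀ i, Measurable ((S i).indicator (f i)) := fun i => (hf i).indicator (hS i)
  simp_rw [e]
  rw [lintegral_prod_eq_prod_lintegral_of_indepFun Finset.univ
    (fun i (x : Fin r → ℝ) => (S i).indicator (f i) (x i))
    (iIndepFun_pi fun i => (hm i).aemeasurable) (fun i => (hm i).comp (measurable_pi_apply i))]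
  refine Finset.prod_congr rfl fun i _ => ?_
  rw [h i, withDensity_apply _ (hS i), ← lintegral_indicator (hS i)]
  exact (measurePreserving_eval ν i).lintegral_comp (hm i)

lemma aux_gauss_ratio (m m' : ℝ) (v : ℝ≥0) (hv : v ≠ 0) :
    gaussianReal m v = (gaussianReal m' v).withDensity
      (fun x => ENNReal.ofReal (Real.exp (((x - m') ^ 2 - (x - m) ^ 2) / (2 * v)))) := by
  rw [gaussianReal_of_var_ne_zero _ hv, gaussianReal_of_var_ne_zero _ hv,
    ← withDensity_mul _ (measurable_gaussianPDF _ _) (by fun_prop)]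
  congr 1
  ext x
  simp only [Pi.mul_apply, gaussianPDF, gaussianPDFReal]
  rw [← ENNReal.ofReal_mul (by positivity), mul_assoc (_ : ℝ)⁻¹, ← Real.exp_add]
  congr 3
  ring

lemma aux_half : gaussianReal 0 1 (Set.Ioi 0) ≤ ENNReal.ofReal (1 / 2) := by
  have h1 : gaussianReal 0 1 (Set.Ioi 0) = gaussianReal 0 1 (Set.Iio 0) := by
    have := gaussianReal_map_neg (μ := 0) (v := 1)
    rw [neg_zero] at this
    conv_lhs => rw [← this]
    rw [Measure.map_apply (by fun_prop) measurableSet_Ioi]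
    congr 1
    ext x; simp
  have h2 : gaussianReal 0 1 (Set.Ioi 0) + gaussianReal 0 1 (Set.Iio 0) ≤ 1 := by
    rw [← measure_union _ measurableSet_Iio]
    · exact prob_le_one
    · rw [Set.disjoint_left]; intro x hx hx'
      exact lt_asymm (Set.mem_Ioi.1 hx) (Set.mem_Iio.1 hx')
  rw [← h1, ← two_mul] at h2
  rw [one_div, ENNReal.ofReal_inv_of_pos two_pos]
  rw [← one_div, ENNReal.le_div_iff_mul_le (by simp) (by simp), mul_comm]
  simpa using h2

lemma aux_tail_pos (t : ℝ) (ht : 0 ≤ t) :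
    gaussianReal 0 1 (Set.Ioi t) ≤ ENNReal.ofReal (1 / 2 * Real.exp (-(t ^ 2) / 2)) := by
  have h1 : gaussianReal 0 1 (Set.Ioi t) = gaussianReal (0 - t) 1 (Set.Ioi 0) := by
    rw [← gaussianReal_map_sub_const, Measure.map_apply (by fun_prop) measurableSet_Ioi]
    congr 1
    ext x; simp
  rw [h1, aux_gauss_ratio (0 - t) 0 1 one_ne_zero, withDensity_apply _ measurableSet_Ioi]
  calc _ ≤ ∫⁻ x in Set.Ioi 0, ENNReal.ofReal (Real.exp (-(t ^ 2) / 2)) ∂(gaussianReal 0 1) := by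
        refine setLIntegral_mono measurable_const fun x hx => ?_
        apply ENNReal.ofReal_le_ofReal
        apply Real.exp_le_exp.2
        have : 0 ≤ x * t := mul_nonneg (le_of_lt hx) ht
        push_cast
        nlinarith
    _ = ENNReal.ofReal (Real.exp (-(t ^ 2) / 2)) * gaussianReal 0 1 (Set.Ioi 0) := by simp
    _ ≤ _ := by
        rw [mul_comm (1 / 2 : ℝ), ENNReal.ofReal_mul (by positivity)]
        gcongr
        exact aux_half

lemma aux_tail_neg (t : ℝ) (ht : t ≤ 0) :
    gaussianReal 0 1 (Set.Ioi t) ≤ ENNReal.ofReal (1 / 2 + -t) := by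
  rw [← Set.Ioc_union_Ioi_eq_Ioi ht, add_comm, ENNReal.ofReal_add (by linarith) (by norm_num)]
  refine (measure_union_le _ _).trans (add_le_add ?_ aux_half)
  rw [gaussianReal_apply _ one_ne_zero]
  calc _ ≤ ∫⁻ x in Set.Ioc t 0, 1 := by
        refine setLIntegral_mono measurable_const fun x hx => ?_
        rw [gaussianPDF, ← ENNReal.ofReal_one]
        apply ENNReal.ofReal_le_ofReal
        rw [gaussianPDFReal]
        refine mul_le_one₀ ?_ (by positivity) ?_
        · apply inv_le_one_of_one_le₀
          rw [Real.one_le_sqrt]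
          have := Real.pi_gt_three
          push_cast; linarith
        · apply Real.exp_le_one_iff.2
          push_cast
          nlinarith [sq_nonneg (x - 0)]
    _ = _ := by simp

lemma aux_numeric (ε δ c : ℝ) (hε0 : 0 < ε) (hε1 : ε < 1) (hδ0 : 0 < δ) (hδ1 : δ < 1)
    (hc : c = Real.sqrt (2 * Real.log (1.25 / δ))) :
    0 < c ∧ gaussianReal 0 1 (Set.Ioi (c - ε / (2 * c))) ≤ ENNReal.ofReal δ := by
  have hx : 0 < 1.25 / δ := by positivity
  have hx1 : 1.25 ≤ 1.25 / δ := by rw [le_div_iff₀ hδ0]; linarith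
  have hl : 0.2 ≤ Real.log (1.25 / δ) := by
    have h1 := Real.one_sub_inv_le_log_of_pos hx
    have : (1.25 / δ)⁻¹ ≤ (1.25 : ℝ)⁻¹ := inv_anti₀ (by norm_num) hx1
    norm_num at *
    linarith
  have hc2 : c ^ 2 = 2 * Real.log (1.25 / δ) := by rw [hc, Real.sq_sqrt (by linarith)]
  have hcnn : 0 ≤ c := by rw [hc]; positivity
  have hc6 : 0.6 ≤ c := by nlinarith
  have hc0 : 0 < c := by linarith
  have hδ : δ = 1.25 * Real.exp (-(c ^ 2) / 2) := by
    rw [hc2, show -(2 * Real.log (1.25 / δ)) / 2 = -Real.log (1.25 / δ) by ring, Real.exp_neg,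
      Real.exp_log hx]
    field_simp
  refine ⟨hc0, ?_⟩
  obtain ⟨q, hq⟩ : ∃ q, q = ε / (2 * c) := ⟨_, rfl⟩
  have hqc : q * c = ε / 2 := by rw [hq]; field_simp
  have hq0 : 0 < q := by rw [hq]; positivity
  rw [← hq]
  rcases le_total 0 (c - q) with ht | ht
  · refine (aux_tail_pos _ ht).trans (ENNReal.ofReal_le_ofReal ?_)
    have h1 : Real.exp (-((c - q) ^ 2) / 2) ≤ Real.exp (1 / 2) * Real.exp (-(c ^ 2) / 2) := by
      rw [← Real.exp_add]
      apply Real.exp_le_exp.2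
      nlinarith
    have h2 : Real.exp (1 / 2) ≤ 2.5 := by
      have : Real.exp (1 / 2) ^ 2 = Real.exp 1 := by rw [← Real.exp_nat_mul]; norm_num
      nlinarith [Real.exp_one_lt_d9, Real.exp_pos (1 / 2)]
    have h3 := Real.exp_pos (-(c ^ 2) / 2)
    have h4 := mul_le_mul_of_nonneg_right h2 h3.le
    linarith
  · refine (aux_tail_neg _ ht).trans (ENNReal.ofReal_le_ofReal ?_)
    have h1 := Real.add_one_le_exp (-(c ^ 2) / 2)
    have h2 : c ^ 2 ≤ 1 / 2 := by nlinarith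
    have h3 : q ≤ 0.84 := by nlinarith
    linarith

lemma aux_law {r : ℕ} (s a : Fin r → ℝ) (v : ℝ≥0) (h : (∑ i, a i ^ 2) * v = 1) :
    (Measure.pi fun i => gaussianReal (s i) v).map (fun x => ∑ i, a i * (x i - s i))
      = gaussianReal 0 1 := by
  have e : (fun x : Fin r → ℝ => ∑ i, a i * (x i - s i))
      = (fun y : Fin r → ℝ => ∑ i, y i) ∘ (fun x i => a i * (x i - s i)) := rfl
  rw [e, ← Measure.map_map (by fun_prop) (by fun_prop)]
  rw [Measure.pi_map_pi (f := fun i x => a i * (x - s i)) (fun i => by fun_prop)]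
  have g : ∀ i, (gaussianReal (s i) v).map (fun x => a i * (x - s i))
      = gaussianReal 0 (.mk (a i ^ 2) (sq_nonneg _) * v) := by
    intro i
    have e : (fun x : ℝ => a i * (x - s i)) = (fun y => a i * y) ∘ (fun x => x - s i) := rfl
    rw [e, ← Measure.map_map (by fun_prop) (by fun_prop), gaussianReal_map_sub_const,
      gaussianReal_map_const_mul]
    simp
  simp_rw [g]
  apply Measure.ext_of_charFun
  ext t
  rw [charFun_map_sum_pi_eq_prod, Finset.prod_apply]
  simp_rw [charFun_gaussianReal]
  rw [← Complex.exp_sum]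
  congr 1
  have h' : (∑ i, (a i : ℂ) ^ 2) * (v : ℝ) = 1 := by exact_mod_cast h
  simp only [NNReal.coe_mul, NNReal.coe_mk, Complex.ofReal_mul, Complex.ofReal_pow]
  simp only [Complex.ofReal_zero, mul_zero, zero_mul, zero_sub, Finset.sum_neg_distrib,
    ← Finset.sum_div, ← Finset.sum_mul, h']
  simp

/-- Gaussian mechanism, in integrated form. -/
lemma aux_gauss (r : ℕ) (ε δ : ℝ)
    (hε0 : 0 < ε) (hε1 : ε < 1) (hδ0 : 0 < δ) (hδ1 : δ < 1)
    (σ : ℝ) (hσ : σ = Real.sqrt 2 * Real.sqrt (2 * Real.log (1.25 / δ)) / ε)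
    (s s' : Fin r → ℝ)
    (hss' : Real.sqrt (∑ i : Fin r, (s i - s' i) ^ 2) ≤ Real.sqrt 2) :
    ∃ B : Set (Fin r → ℝ), MeasurableSet B ∧
      (Measure.pi fun i => gaussianReal (s i) (Real.toNNReal (σ ^ 2))) B ≤ ENNReal.ofReal δ ∧
      (Measure.pi fun i => gaussianReal (s i) (Real.toNNReal (σ ^ 2))).restrict Bᶜ
        ≤ ENNReal.ofReal (Real.exp ε) •
          (Measure.pi fun i => gaussianReal (s' i) (Real.toNNReal (σ ^ 2))) := by
  obtain ⟨c, hc⟩ : ∃ c, c = Real.sqrt (2 * Real.log (1.25 / δ)) := ⟨_, rfl⟩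
  obtain ⟨hc0, htail⟩ := aux_numeric ε δ c hε0 hε1 hδ0 hδ1 hc
  rw [← hc] at hσ
  have hσ0 : 0 < σ := by rw [hσ]; positivity
  obtain ⟨v, hv⟩ : ∃ v, v = Real.toNNReal (σ ^ 2) := ⟨_, rfl⟩
  rw [← hv]
  have hvr : (v : ℝ) = σ ^ 2 := by rw [hv, Real.coe_toNNReal _ (sq_nonneg _)]
  have hv0 : v ≠ 0 := by
    intro h; rw [h] at hvr; simp only [NNReal.coe_zero] at hvr; exact (pow_pos hσ0 2).ne hvr
  obtain ⟨D, hD⟩ : ∃ D, D = Real.sqrt (∑ i : Fin r, (s i - s' i) ^ 2) := ⟨_, rfl⟩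
  have hDnn : 0 ≤ D := by rw [hD]; positivity
  have hD2 : D ^ 2 = ∑ i : Fin r, (s i - s' i) ^ 2 := by
    rw [hD, Real.sq_sqrt (Finset.sum_nonneg fun i _ => sq_nonneg _)]
  rw [← hD] at hss'
  let Y : (Fin r → ℝ) → ℝ := fun x => ∑ i, (s i - s' i) * (x i - s i)
  have hY : Measurable Y := by fun_prop
  refine ⟨Y ⁻¹' Set.Ioi (σ ^ 2 * ε - D ^ 2 / 2), hY measurableSet_Ioi, ?_, ?_⟩
  · rcases hDnn.eq_or_lt with h0 | hDpos
    · have hz : ∀ i, s i - s' i = 0 := by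
        intro i
        rw [← h0] at hD2
        have := (Finset.sum_eq_zero_iff_of_nonneg (fun i _ => sq_nonneg (s i - s' i))).1
          (by rw [← hD2]; norm_num) i (Finset.mem_univ i)
        exact pow_eq_zero_iff (two_ne_zero) |>.1 this
      have : Y ⁻¹' Set.Ioi (σ ^ 2 * ε - D ^ 2 / 2) = ∅ := by
        ext x
        simp only [Y, hz, ← h0, Set.mem_preimage, Set.mem_Ioi, zero_mul, Finset.sum_const_zero,
          Set.mem_empty_iff_false, iff_false, not_lt]
        have : 0 < σ ^ 2 * ε := by positivity
        norm_num; linarith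
      rw [this]; simp
    · have hlaw := aux_law s (fun i => (s i - s' i) / (D * σ)) v (by
        simp_rw [div_pow]
        rw [← Finset.sum_div, ← hD2, hvr]
        field_simp)
      refine le_trans ?_ htail
      rw [← hlaw, Measure.map_apply (by fun_prop) measurableSet_Ioi]
      refine measure_mono fun x hx => ?_
      simp only [Set.mem_preimage, Set.mem_Ioi] at hx ⊢
      have e : ∑ i, (s i - s' i) / (D * σ) * (x i - s i) = Y x / (D * σ) := by
        simp only [Y, Finset.sum_div]
        refine Finset.sum_congr rfl fun i _ => ?_
        ring
      rw [e, lt_div_iff₀ (by positivity)]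
      refine lt_of_le_of_lt ?_ hx
      -- (c - ε/(2c)) D σ ≤ σ² ε - D²/2, where σ ε = √2 c
      obtain ⟨w, hw⟩ : ∃ w, w = Real.sqrt 2 := ⟨_, rfl⟩
      have hw2 : w ^ 2 = 2 := by rw [hw]; norm_num
      have hw0 : 0 < w := by rw [hw]; positivity
      rw [← hw] at hσ hss'
      have hσε : σ * ε = w * c := by rw [hσ]; field_simp
      have hq : ε / (2 * c) * σ = w / 2 := by rw [hσ]; field_simp
      have h1 : (c - ε / (2 * c)) * (D * σ) = c * σ * D - w / 2 * D := by rw [← hq]; ring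
      have h2 : σ ^ 2 * ε = c * σ * w := by rw [pow_two, mul_assoc, hσε]; ring
      rw [h1, h2]
      have h3 : 0 ≤ c * σ * (w - D) := by
        have : 0 ≤ w - D := by linarith
        positivity
      nlinarith
  · rw [aux_pi_withDensity (fun i => gaussianReal (s i) v) (fun i => gaussianReal (s' i) v)
      (fun i x => ENNReal.ofReal (Real.exp (((x - s' i) ^ 2 - (x - s i) ^ 2) / (2 * v))))
      (fun i => by fun_prop) (fun i => aux_gauss_ratio _ _ _ hv0)]
    rw [restrict_withDensity (hY measurableSet_Ioi).compl, Measure.le_iff]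
    intro S hS
    rw [withDensity_apply _ hS, Measure.restrict_restrict hS, Measure.smul_apply, smul_eq_mul]
    calc _ ≤ ∫⁻ x in S ∩ (Y ⁻¹' Set.Ioi (σ ^ 2 * ε - D ^ 2 / 2))ᶜ, ENNReal.ofReal (Real.exp ε)
              ∂(Measure.pi fun i => gaussianReal (s' i) v) := by
          refine setLIntegral_mono measurable_const fun x hx => ?_
          have hx2 := hx.2
          simp only [Set.mem_compl_iff, Set.mem_preimage, Set.mem_Ioi, not_lt] at hx2
          rw [← ENNReal.ofReal_prod_of_nonneg (fun i _ => (Real.exp_pos _).le), ← Real.exp_sum]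
          apply ENNReal.ofReal_le_ofReal
          apply Real.exp_le_exp.2
          have e : ∑ i, ((x i - s' i) ^ 2 - (x i - s i) ^ 2) = 2 * Y x + D ^ 2 := by
            rw [hD2]
            simp only [Y, Finset.mul_sum]
            rw [← Finset.sum_add_distrib]
            refine Finset.sum_congr rfl fun i _ => ?_
            ring
          rw [← Finset.sum_div, e, hvr, div_le_iff₀ (by positivity)]
          linarith
      _ = ENNReal.ofReal (Real.exp ε) * (Measure.pi fun i => gaussianReal (s' i) v)
            (S ∩ (Y ⁻¹' Set.Ioi (σ ^ 2 * ε - D ^ 2 / 2))ᶜ) := by simp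
      _ ≤ _ := by gcongr; exact Set.inter_subset_left

lemma aux_lap_le (E E' ε : ℝ) (hε : 0 < ε) (h : |E - E'| ≤ 1) :
    lapMeasure E ε ≤ ENNReal.ofReal (Real.exp ε) • lapMeasure E' ε := by
  unfold lapMeasure
  rw [← withDensity_smul _ (by fun_prop)]
  refine withDensity_mono (Filter.Eventually.of_forall fun t => ?_)
  simp only [Pi.smul_apply, smul_eq_mul]
  rw [← ENNReal.ofReal_mul (by positivity)]
  apply ENNReal.ofReal_le_ofReal
  rw [mul_left_comm, ← Real.exp_add]
  gcongr
  have : |t - E'| ≤ |t - E| + |E - E'| := abs_sub_le _ _ _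
  nlinarith

lemma aux_lap_mass (E ε : ℝ) (hε : 0 < ε) : lapMeasure E ε Set.univ ≤ 1 := by
  unfold lapMeasure
  rw [withDensity_apply _ MeasurableSet.univ, Measure.restrict_univ]
  have hm : Measurable (exponentialPDF ε) := (measurable_exponentialPDFReal ε).ennreal_ofReal
  have h1 : ∫⁻ t, exponentialPDF ε (t - E) = 1 := by
    rw [lintegral_sub_right_eq_self (fun t => exponentialPDF ε t) E]
    exact lintegral_exponentialPDF_eq_one hε
  have h2 : ∫⁻ t, exponentialPDF ε (E - t) = 1 := by
    rw [lintegral_sub_left_eq_self (fun t => exponentialPDF ε t) E]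
    exact lintegral_exponentialPDF_eq_one hε
  calc _ ≤ ∫⁻ t, ENNReal.ofReal (1 / 2) * (exponentialPDF ε (t - E) + exponentialPDF ε (E - t)) := by
        refine lintegral_mono fun t => ?_
        dsimp only
        rcases le_total E t with h | h
        · rw [abs_of_nonneg (sub_nonneg.2 h), exponentialPDF_of_nonneg (sub_nonneg.2 h), mul_add]
          refine le_trans ?_ le_self_add
          rw [← ENNReal.ofReal_mul (by norm_num)]
          apply ENNReal.ofReal_le_ofReal
          apply le_of_eq; ring
        · rw [abs_of_nonpos (sub_nonpos.2 h), exponentialPDF_of_nonneg (sub_nonneg.2 h), mul_add]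
          refine le_trans ?_ le_add_self
          rw [← ENNReal.ofReal_mul (by norm_num)]
          apply ENNReal.ofReal_le_ofReal
          rw [neg_sub]
          apply le_of_eq; ring
    _ = 1 := by
        rw [lintegral_const_mul _ (by fun_prop), lintegral_add_left (by fun_prop), h1, h2,
          ← ENNReal.ofReal_one, ← ENNReal.ofReal_add (by norm_num) (by norm_num),
          ← ENNReal.ofReal_mul (by norm_num)]
        norm_num

/-- **Theorem 1, joint perturbation mechanism.** The joint
mechanism that perturbs the top-`r` singular values (with sensitivity `√2`)
with Gaussian noise of parameter `σ = √2·√(2·ln(1.25/δ))/ε_lr` and the edge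
count (with sensitivity `1`) with Laplace noise of scale `1/ε_e` satisfies the
`(ε_lr + ε_e, δ)`-indistinguishability inequality. -/
theorem joint_perturbation_mechanism (r : ℕ) (hr : 1 ≤ r)
    (εlr εe δ : ℝ)
    (hεlr0 : 0 < εlr) (hεlr1 : εlr < 1) (hεe : 0 < εe) (hδ0 : 0 < δ) (hδ1 : δ < 1)
    (σ : ℝ) (hσ : σ = Real.sqrt 2 * Real.sqrt (2 * Real.log (1.25 / δ)) / εlr)
    (s s' : Fin r → ℝ)
    (hss' : Real.sqrt (∑ i : Fin r, (s i - s' i) ^ 2) ≤ Real.sqrt 2)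
    (E E' : ℝ) (hEE' : |E - E'| ≤ 1) :
    ∀ W : Set ((Fin r → ℝ) × ℝ), MeasurableSet W →
      ((Measure.pi fun i => gaussianReal (s i) (Real.toNNReal (σ ^ 2))).prod
          (lapMeasure E εe)) W
        ≤ ENNReal.ofReal (Real.exp (εlr + εe))
            * ((Measure.pi fun i => gaussianReal (s' i) (Real.toNNReal (σ ^ 2))).prod
                (lapMeasure E' εe)) W
          + ENNReal.ofReal δ := by
  intro W hW
  obtain ⟨B, hB, hBδ, hle⟩ := aux_gauss r εlr δ hεlr0 hεlr1 hδ0 hδ1 σ hσ s s' hss'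
  set P := Measure.pi fun i => gaussianReal (s i) (Real.toNNReal (σ ^ 2)) with hP
  set Q := Measure.pi fun i => gaussianReal (s' i) (Real.toNNReal (σ ^ 2)) with hQ
  have hlap := aux_lap_le E E' εe hεe hEE'
  have hmass := aux_lap_mass E εe hεe
  haveI : IsFiniteMeasure (lapMeasure E εe) := ⟨lt_of_le_of_lt hmass ENNReal.one_lt_top⟩
  haveI : IsFiniteMeasure (lapMeasure E' εe) :=
    ⟨lt_of_le_of_lt (aux_lap_mass E' εe hεe) ENNReal.one_lt_top⟩
  have hmeas : Measurable fun x => lapMeasure E εe (Prod.mk x ⁻¹' W) :=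
    measurable_measure_prodMk_left hW
  have hmeas' : Measurable fun x => lapMeasure E' εe (Prod.mk x ⁻¹' W) :=
    measurable_measure_prodMk_left hW
  rw [Measure.prod_apply hW, Measure.prod_apply hW, ← lintegral_add_compl _ hB, add_comm]
  refine add_le_add ?_ ?_
  · calc _ ≤ ∫⁻ x, lapMeasure E εe (Prod.mk x ⁻¹' W) ∂(ENNReal.ofReal (Real.exp εlr) • Q) :=
          lintegral_mono' hle le_rfl
      _ ≤ ∫⁻ x, ENNReal.ofReal (Real.exp εe) * lapMeasure E' εe (Prod.mk x ⁻¹' W)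
            ∂(ENNReal.ofReal (Real.exp εlr) • Q) := lintegral_mono fun x => hlap _
      _ = _ := by
          rw [lintegral_smul_measure, lintegral_const_mul _ hmeas', smul_eq_mul, ← mul_assoc,
            ← ENNReal.ofReal_mul (by positivity), ← Real.exp_add]
  · calc _ ≤ ∫⁻ x in B, 1 ∂P :=
          lintegral_mono fun x => (measure_mono (Set.subset_univ _)).trans hmass
      _ = P B := by simp
      _ ≤ _ := hBδ
end
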